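/- (FRFT inversion) For α ∈ ℝⁿ with no coordinate in πℤ and any Schwartz function f, F_{-α}(F_α(f)) = f; equivalently f(x) = ∫_{ℝⁿ} F_α(f)(u) K_{-α}(u,x) du for all x ∈ ℝⁿ. -/

import Mathlib

open MeasureTheory Real SchwartzMap Filter
open scoped FourierTransform

noncomputable section

abbrev Rn (n : ℕ) := EuclideanSpace ℝ (Fin n)

/-- The chirp function `e_α(x) = exp(2πi Σₖ (cot αₖ / 2) xₖ²)`. -/
def chirp {n : ℕ} (α : Rn n) (x : Rn n) : ℂ :=
  Complex.exp (2 * (π : ℂ) * Complex.I *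
    ((∑ k, Real.cot (α k) / 2 * (x k) ^ 2 : ℝ) : ℂ))

/-- The constant `c(α) = ∏ₖ √(1 - i cot αₖ)`. -/
def cConst {n : ℕ} (α : Rn n) : ℂ :=
  ∏ k, (1 - Complex.I * (Real.cot (α k) : ℂ)) ^ ((1 : ℂ) / 2)

/-- The FRFT kernel `K_α(x,u)`. -/
def frftKernel {n : ℕ} (α : Rn n) (x u : Rn n) : ℂ :=
  ∏ k, (1 - Complex.I * (Real.cot (α k) : ℂ)) ^ ((1 : ℂ) / 2) *
    Complex.exp (2 * (π : ℂ) * Complex.I *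
      ((Real.cot (α k) / 2 * ((x k) ^ 2 + (u k) ^ 2)
        - x k * u k / Real.sin (α k) : ℝ) : ℂ))

/-- The multidimensional fractional Fourier transform. -/
def frft {n : ℕ} (α : Rn n) (f : Rn n → ℂ) (u : Rn n) : ℂ :=
  ∫ x, f x * frftKernel α x u

/-- `ũ = (u₁ csc α₁, ..., uₙ csc αₙ)`. -/
def tilde {n : ℕ} (α u : Rn n) : Rn n :=
  (EuclideanSpace.equiv (Fin n) ℝ).symm fun k => u k / Real.sin (α k)

/-- `γ(β) = π^{n/2} 2^β Γ(β/2) / Γ((n-β)/2)`. -/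
def gammaC (n : ℕ) (β : ℝ) : ℝ :=
  π ^ ((n : ℝ) / 2) * 2 ^ β * Real.Gamma (β / 2) / Real.Gamma (((n : ℝ) - β) / 2)

/-- The classical Riesz potential `I_β`. -/
def rieszPot (n : ℕ) (β : ℝ) (f : Rn n → ℂ) (x : Rn n) : ℂ :=
  ((1 / gammaC n β : ℝ) : ℂ) * ∫ y, f y / ((‖x - y‖ ^ ((n : ℝ) - β) : ℝ) : ℂ)

/-- The fractional Riesz potential related to chirp functions `I_β^α`. -/
def rieszPotChirp {n : ℕ} (α : Rn n) (β : ℝ) (f : Rn n → ℂ) (x : Rn n) : ℂ :=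
  ((1 / gammaC n β : ℝ) : ℂ) * chirp (-α) x *
    ∫ y, f y * chirp α y / ((‖x - y‖ ^ ((n : ℝ) - β) : ℝ) : ℂ)

/-- `c_n = Γ((n+1)/2)/π^{(n+1)/2}`. -/
def nConst (n : ℕ) : ℝ := Real.Gamma (((n : ℝ) + 1) / 2) / π ^ (((n : ℝ) + 1) / 2)

/-- The j-th fractional Riesz transform related to chirp functions (principal value). -/
def rieszTransChirp {n : ℕ} (α : Rn n) (j : Fin n) (f : Rn n → ℂ) (x : Rn n) : ℂ :=
  ((nConst n : ℝ) : ℂ) * chirp (-α) x *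
    limUnder (nhdsWithin (0 : ℝ) (Set.Ioi 0)) fun ε =>
      ∫ y in {y : Rn n | ε < dist x y},
        (((x j - y j) / ‖x - y‖ ^ ((n : ℝ) + 1) : ℝ) : ℂ) * f y * chirp α y

/-- Partial derivative in the k-th coordinate direction. -/
def partialD {n : ℕ} (k : Fin n) (g : Rn n → ℂ) (y : Rn n) : ℂ :=
  fderiv ℝ g y (EuclideanSpace.single k 1)

/-- `α` has no coordinate in `πℤ`. -/
def notPiZ {n : ℕ} (α : Rn n) : Prop := ∀ k, ∀ m : ℤ, α k ≠ m * π

/-! Up to the unimodular chirp and a constant, `F_α f` is the Fourier transform of `e_α f` read at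
the rescaled frequency `ũ`. In `F_{-α} (F_α f)` the inner chirps cancel, the minus sign turns the
outer Fourier transform into the inverse one, and the Jacobian `∏ₖ |csc αₖ|` of `u ↦ ũ` is exactly
`c(-α) c(α)`. Fourier inversion for `e_α f` then gives the result. -/

section LinearChangeOfVariables

variable {E F : Type*} [NormedAddCommGroup E] [NormedSpace ℝ E] [MeasurableSpace E] [BorelSpace E]
  [FiniteDimensional ℝ E] [NormedAddCommGroup F] {T : E →L[ℝ] E}

lemma measurableEmbedding_of_det_ne_zero (hT : T.det ≠ 0) : MeasurableEmbedding T :=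
  (T.toContinuousLinearEquivOfDetNeZero hT).toHomeomorph.measurableEmbedding

variable (μ : Measure E) [μ.IsAddHaarMeasure]

lemma measurePreserving_of_det_ne_zero (hT : T.det ≠ 0) :
    MeasurePreserving T (ENNReal.ofReal |T.det| • μ) μ := by
  refine ⟨T.continuous.measurable, ?_⟩
  have hmap : μ.map T = ENNReal.ofReal |T.det⁻¹| • μ :=
    Measure.map_linearMap_addHaar_eq_smul_addHaar μ hT
  rw [Measure.map_smul, hmap, smul_smul, ← ENNReal.ofReal_mul (abs_nonneg _), ← abs_mul,
    mul_inv_cancel₀ hT, abs_one, ENNReal.ofReal_one, one_smul]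

lemma integrable_comp_iff_of_det_ne_zero (hT : T.det ≠ 0) {g : E → F} :
    Integrable (g ∘ T) μ ↔ Integrable g μ := by
  have hdet : ENNReal.ofReal |T.det| ≠ 0 := by simpa using hT
  rw [← integrable_smul_measure hdet ENNReal.ofReal_ne_top]
  exact (measurePreserving_of_det_ne_zero μ hT).integrable_comp_emb
    (measurableEmbedding_of_det_ne_zero hT)

lemma abs_det_smul_integral_comp [NormedSpace ℝ F] (hT : T.det ≠ 0) (g : E → F) :
    |T.det| • ∫ x, g (T x) ∂μ = ∫ x, g x ∂μ := by
  rw [← ENNReal.toReal_ofReal (abs_nonneg T.det), ← integral_smul_measure]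
  exact (measurePreserving_of_det_ne_zero μ hT).integral_comp
    (measurableEmbedding_of_det_ne_zero hT) g

end LinearChangeOfVariables

lemma abs_det_smul_fourierInv_comp {V F : Type*} [NormedAddCommGroup V] [InnerProductSpace ℝ V]
    [FiniteDimensional ℝ V] [MeasurableSpace V] [BorelSpace V] [NormedAddCommGroup F]
    [NormedSpace ℂ F] {T : V →L[ℝ] V} (hT : T.det ≠ 0) (g : V → F) (x : V) :
    |T.det| • 𝓕⁻ (g ∘ T) (ContinuousLinearMap.adjoint T x) = 𝓕⁻ g x := by
  simp only [Real.fourierInv_eq, ContinuousLinearMap.adjoint_inner_right, Function.comp_apply]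
  exact abs_det_smul_integral_comp volume hT fun v => 𝐞 (inner ℝ v x) • g v

lemma iteratedDeriv_cexp_ofReal_mul_I (m : ℕ) :
    iteratedDeriv m (fun t : ℝ => Complex.exp (t * Complex.I)) =
      fun t : ℝ => Complex.I ^ m * Complex.exp (t * Complex.I) := by
  induction m with
  | zero => simp
  | succ m ih =>
    ext t
    have hderiv : HasDerivAt (fun s : ℝ => (s : ℂ) * Complex.I) (1 * Complex.I) t :=
      Complex.ofRealCLM.hasDerivAt.mul_const Complex.I
    rw [iteratedDeriv_succ, ih, (hderiv.cexp.const_mul (Complex.I ^ m)).deriv]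
    ring

lemma hasTemperateGrowth_cexp_ofReal_mul_I :
    Function.HasTemperateGrowth fun t : ℝ => Complex.exp (t * Complex.I) := by
  refine ⟨(Complex.ofRealCLM.contDiff.mul contDiff_const).cexp, fun m => ⟨0, 1, fun t => ?_⟩⟩
  rw [norm_iteratedFDeriv_eq_norm_iteratedDeriv, iteratedDeriv_cexp_ofReal_mul_I]
  simp [Complex.norm_exp_ofReal_mul_I]

section FractionalFourierTransform

variable {n : ℕ} {α : Rn n} {f : Rn n → ℂ}

lemma chirp_eq_cexp_ofReal_mul_I (α x : Rn n) :
    chirp α x = Complex.exp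
      ((2 * π * ∑ k, Real.cot (α k) / 2 * x k ^ 2 : ℝ) * Complex.I) := by
  rw [chirp]
  push_cast
  ring_nf

lemma norm_chirp (α x : Rn n) : ‖chirp α x‖ = 1 := by
  rw [chirp_eq_cexp_ofReal_mul_I, Complex.norm_exp_ofReal_mul_I]

lemma hasTemperateGrowth_chirp (α : Rn n) : (chirp α).HasTemperateGrowth := by
  have hcoord (k : Fin n) : Function.HasTemperateGrowth fun x : Rn n => x k :=
    (EuclideanSpace.proj k : Rn n →L[ℝ] ℝ).hasTemperateGrowth
  have hphase : Function.HasTemperateGrowth fun x : Rn n =>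
      2 * π * ∑ k, Real.cot (α k) / 2 * x k ^ 2 := by
    fun_prop
  rw [funext (chirp_eq_cexp_ofReal_mul_I α)]
  exact hasTemperateGrowth_cexp_ofReal_mul_I.comp hphase

lemma cot_neg (a : ℝ) : Real.cot (-a) = -Real.cot a := by
  simp [Real.cot_eq_cos_div_sin, div_neg]

lemma chirp_neg_mul_chirp (α x : Rn n) : chirp (-α) x * chirp α x = 1 := by
  rw [chirp, chirp, ← Complex.exp_add, ← mul_add, ← Complex.ofReal_add, ← Finset.sum_add_distrib]
  simp [cot_neg, neg_div]

lemma integrable_chirp_mul (α : Rn n) (hf : Integrable f) : Integrable (chirp α * f) :=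
  hf.bdd_mul (hasTemperateGrowth_chirp α).1.continuous.aestronglyMeasurable
    (.of_forall fun x => (norm_chirp α x).le)

lemma integrable_chirp_mul_iff (α : Rn n) : Integrable (chirp α * f) ↔ Integrable f := by
  refine ⟨fun h => ?_, integrable_chirp_mul α⟩
  have hcancel : chirp (-α) * (chirp α * f) = f := by
    ext x
    simp only [Pi.mul_apply, ← mul_assoc, chirp_neg_mul_chirp, one_mul]
  exact hcancel ▸ integrable_chirp_mul (-α) h

/-- The rescaling `u ↦ ũ` as a continuous linear map, given by the diagonal matrix with entries
`csc αₖ = (sin αₖ)⁻¹`; its determinant is the Jacobian in the change of variables. -/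
def tildeCLM (α : Rn n) : Rn n →L[ℝ] Rn n :=
  Matrix.toEuclideanCLM (𝕜 := ℝ) (Matrix.diagonal fun k => (Real.sin (α k))⁻¹)

lemma coe_tildeCLM (α : Rn n) : ⇑(tildeCLM α) = tilde α := by
  ext u k
  simp [tildeCLM, tilde, Matrix.mulVec_diagonal, div_eq_inv_mul]

lemma det_tildeCLM (α : Rn n) : (tildeCLM α).det = ∏ k, (Real.sin (α k))⁻¹ := by
  rw [← Matrix.det_diagonal, ← LinearMap.det_toLin (EuclideanSpace.basisFun (Fin n) ℝ).toBasis]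
  rfl

lemma adjoint_tildeCLM (α : Rn n) : ContinuousLinearMap.adjoint (tildeCLM α) = tildeCLM α := by
  have hdiag : IsSelfAdjoint (Matrix.diagonal fun k => (Real.sin (α k))⁻¹) :=
    Matrix.isHermitian_diagonal _
  exact (hdiag.map Matrix.toEuclideanCLM).adjoint_eq

lemma tilde_neg_left (α u : Rn n) : tilde (-α) u = -tilde α u := by
  ext k
  simp [tilde, div_neg]

lemma sin_ne_zero_of_notPiZ (hα : notPiZ α) (k : Fin n) : Real.sin (α k) ≠ 0 :=
  Real.sin_ne_zero_iff.2 fun m => (hα k m).symm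

lemma det_tildeCLM_ne_zero (hα : notPiZ α) : (tildeCLM α).det ≠ 0 := by
  rw [det_tildeCLM]
  exact Finset.prod_ne_zero_iff.2 fun k _ => inv_ne_zero (sin_ne_zero_of_notPiZ hα k)

lemma conj_cpow_half_mul_cpow_half {z : ℂ} (hz : z.arg ≠ π) :
    (starRingEnd ℂ z) ^ (1 / 2 : ℂ) * z ^ (1 / 2 : ℂ) = ‖z‖ := by
  have hnorm : ‖z ^ (1 / 2 : ℂ)‖ = √‖z‖ := by
    rw [Real.sqrt_eq_rpow, ← Complex.norm_cpow_real]
    norm_num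
  rw [Complex.conj_cpow _ _ hz, map_div₀, map_one, Complex.conj_ofNat, Complex.conj_mul', hnorm,
    ← Complex.ofReal_pow, Real.sq_sqrt (norm_nonneg z)]

lemma norm_one_sub_I_mul_cot {a : ℝ} (ha : Real.sin a ≠ 0) :
    ‖1 - Complex.I * Real.cot a‖ = |(Real.sin a)⁻¹| := by
  have hsq : 1 + Real.cot a ^ 2 = (Real.sin a)⁻¹ ^ 2 := by
    rw [Real.cot_eq_cos_div_sin]
    field_simp
    exact Real.sin_sq_add_cos_sq a
  have hmk : 1 - Complex.I * Real.cot a = (1 : ℝ) + (-Real.cot a : ℝ) * Complex.I := by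
    push_cast
    ring
  rw [hmk, Complex.norm_add_mul_I, neg_sq, one_pow, hsq, Real.sqrt_sq_eq_abs]

lemma cConst_neg_mul_cConst (hα : notPiZ α) :
    cConst (-α) * cConst α = (|(tildeCLM α).det| : ℝ) := by
  rw [cConst, cConst, ← Finset.prod_mul_distrib, det_tildeCLM, Finset.abs_prod,
    Complex.ofReal_prod]
  refine Finset.prod_congr rfl fun k _ => ?_
  set z : ℂ := 1 - Complex.I * Real.cot (α k) with hz
  have harg : z.arg ≠ π := by
    intro h
    have hre := (Complex.arg_eq_pi_iff.1 h).1
    norm_num [hz, -Complex.ofReal_cot] at hre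
  have hconj : 1 - Complex.I * Real.cot ((-α) k) = starRingEnd ℂ z := by
    simp [hz, cot_neg, -Complex.ofReal_cot]
  rw [hconj, conj_cpow_half_mul_cpow_half harg, hz,
    norm_one_sub_I_mul_cot (sin_ne_zero_of_notPiZ hα k)]

lemma cConst_ne_zero (α : Rn n) : cConst α ≠ 0 := by
  refine Finset.prod_ne_zero_iff.2 fun k _ => ?_
  refine (Complex.cpow_ne_zero_iff_of_exponent_ne_zero (by norm_num)).2 fun h => ?_
  simpa [-Complex.ofReal_cot] using congrArg Complex.re h

lemma frftKernel_eq (α x u : Rn n) :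
    frftKernel α x u = cConst α * chirp α x * chirp α u *
      Complex.exp ((-2 * π * inner ℝ x (tilde α u) : ℝ) * Complex.I) := by
  have hinner : inner ℝ x (tilde α u) = ∑ k, x k * u k / Real.sin (α k) := by
    rw [PiLp.inner_apply]
    refine Finset.sum_congr rfl fun k _ => ?_
    simp [tilde, mul_div_assoc, mul_comm]
  have hphase :
      ∑ k, (Real.cot (α k) / 2 * (x k ^ 2 + u k ^ 2) - x k * u k / Real.sin (α k)) =
        ∑ k, Real.cot (α k) / 2 * x k ^ 2 + ∑ k, Real.cot (α k) / 2 * u k ^ 2 -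
          inner ℝ x (tilde α u) := by
    simp only [hinner, mul_add, Finset.sum_sub_distrib, Finset.sum_add_distrib]
  rw [frftKernel, Finset.prod_mul_distrib, ← Complex.exp_sum, ← Finset.mul_sum,
    ← Complex.ofReal_sum, hphase, cConst, chirp, chirp, mul_assoc (∏ k, _), mul_assoc (∏ k, _),
    ← Complex.exp_add, ← Complex.exp_add]
  congr 2
  push_cast
  ring

lemma frft_eq_fourier (α : Rn n) (f : Rn n → ℂ) (u : Rn n) :
    frft α f u = cConst α * chirp α u * 𝓕 (chirp α * f) (tilde α u) := by
  rw [frft, Real.fourier_eq', ← integral_const_mul]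
  refine integral_congr_ae (.of_forall fun y => ?_)
  simp only [frftKernel_eq, Pi.mul_apply, smul_eq_mul]
  ring

lemma chirp_neg_mul_frft (α : Rn n) (f : Rn n → ℂ) :
    chirp (-α) * frft α f = cConst α • (𝓕 (chirp α * f) ∘ tildeCLM α) := by
  ext u
  simp only [Pi.mul_apply, Pi.smul_apply, Function.comp_apply, frft_eq_fourier, coe_tildeCLM,
    smul_eq_mul]
  linear_combination cConst α * 𝓕 (chirp α * f) (tilde α u) * chirp_neg_mul_chirp α u

lemma integrable_frft_iff (hα : notPiZ α) :
    Integrable (frft α f) ↔ Integrable (𝓕 (chirp α * f)) := by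
  rw [← integrable_chirp_mul_iff (-α), chirp_neg_mul_frft, integrable_smul_iff (cConst_ne_zero α),
    integrable_comp_iff_of_det_ne_zero volume (det_tildeCLM_ne_zero hα)]

lemma integrable_frft_schwartz (hα : notPiZ α) (f : 𝓢(Rn n, ℂ)) : Integrable (frft α f) := by
  have hchirp : chirp α * f = smulLeftCLM ℂ (chirp α) f := by
    rw [smulLeftCLM_apply (hasTemperateGrowth_chirp α)]
    rfl
  rw [integrable_frft_iff hα, hchirp, ← SchwartzMap.fourier_coe]
  exact (𝓕 (smulLeftCLM ℂ (chirp α) f)).integrable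

lemma frft_neg_frft_eq_fourierInv_fourier (hα : notPiZ α) (f : Rn n → ℂ) (x : Rn n) :
    frft (-α) (frft α f) x = chirp (-α) x * 𝓕⁻ (𝓕 (chirp α * f)) x := by
  set G := 𝓕 (chirp α * f)
  have hconst : 𝓕 (cConst α • (G ∘ tildeCLM α)) = cConst α • 𝓕 (G ∘ tildeCLM α) :=
    VectorFourier.fourierIntegral_const_smul _ _ _ _ _
  have hrescale := abs_det_smul_fourierInv_comp (det_tildeCLM_ne_zero hα) G x
  rw [adjoint_tildeCLM] at hrescale
  calc frft (-α) (frft α f) x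
      = cConst (-α) * chirp (-α) x * 𝓕 (cConst α • (G ∘ tildeCLM α)) (-tildeCLM α x) := by
        rw [frft_eq_fourier, chirp_neg_mul_frft, tilde_neg_left, coe_tildeCLM]
    _ = chirp (-α) x * (cConst (-α) * cConst α * 𝓕⁻ (G ∘ tildeCLM α) (tildeCLM α x)) := by
        rw [hconst, Pi.smul_apply, smul_eq_mul, ← Real.fourierInv_eq_fourier_neg]
        ring
    _ = chirp (-α) x * 𝓕⁻ G x := by
        rw [cConst_neg_mul_cConst hα, ← Complex.real_smul, hrescale]

theorem frft_inversion_general (hα : notPiZ α) (hf : Integrable f) (hfrft : Integrable (frft α f))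
    {x : Rn n} (hx : ContinuousAt f x) : frft (-α) (frft α f) x = f x := by
  have hchirpf : ContinuousAt (chirp α * f) x :=
    (hasTemperateGrowth_chirp α).1.continuous.continuousAt.mul hx
  rw [frft_neg_frft_eq_fourierInv_fourier hα,
    (integrable_chirp_mul α hf).fourierInv_fourier_eq ((integrable_frft_iff hα).1 hfrft) hchirpf,
    Pi.mul_apply, ← mul_assoc, chirp_neg_mul_chirp, one_mul]

end FractionalFourierTransform

/-- FRFT inversion theorem. -/
theorem frft_inversion {n : ℕ} (α : Rn n) (hα : notPiZ α) (f : 𝓢(Rn n, ℂ)) (x : Rn n) :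
    frft (-α) (frft α (⇑f)) x = f x :=
  frft_inversion_general hα f.integrable (integrable_frft_schwartz hα f) f.continuous.continuousAt
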